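/- arXiv:2305.17133 — 3 statements merged into one kernel-verified Lean document; each statement's English description precedes it below -/
import Mathlib

section
/- Let γ : I → ℝ³ be smooth, let V ⊆ ℝ³∖{0} be open, and let θ₁ : V → I be smooth with ⟨γ'(θ₁(ξ)), ξ⟩ = 0 on V; set v(ξ) := ⟨γ''(θ₁(ξ)), ξ⟩ and assume v(ξ) ≠ 0 on V. Set q₁(ξ) := ⟨γ(θ₁(ξ)), ξ⟩ and κ(ξ) := ⟨γ'(θ₁(ξ)), ∇θ₁(ξ)⟩. Then for all ξ ∈ V: (i) ∇θ₁(ξ) = −γ'(θ₁(ξ))/v(ξ); (ii) the Hessian matrix ∂²q₁(ξ) equals the outer product of γ'(θ₁(ξ)) with ∇θ₁(ξ) and hence has rank at most 1, with its unique possibly non-zero eigenvalue equal to κ(ξ); (iii) κ(ξ) + v(ξ)|∇θ₁(ξ)|² = 0. -/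
open MeasureTheory Real Set
open scoped RealInnerProductSpace ContDiff

noncomputable section

abbrev E3 : Type := EuclideanSpace ℝ (Fin 3)

/-- The interval `I = [-1,1]`. -/
def I1 : Set ℝ := Set.Icc (-1 : ℝ) 1

/-- The Hessian matrix of `g : ℝ³ → ℝ` at `ξ`, with entries
`∂²g(ξ)[e_i, e_j]`. -/
def hessian (g : E3 → ℝ) (ξ : E3) : Matrix (Fin 3) (Fin 3) ℝ :=
  Matrix.of fun i j =>
    iteratedFDeriv ℝ 2 g ξ ![EuclideanSpace.single i 1, EuclideanSpace.single j 1]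

/-!
Write `q ξ = ⟪γ (θ ξ), ξ⟫`. Since `⟪γ' (θ ξ), ξ⟫ = 0`, the variation of `θ` contributes nothing to
the first derivative of `q`, so `∇q = γ ∘ θ`. Differentiating once more, the Hessian of `q` has
the entries `∂ᵢθ(ξ) γ'ⱼ(θ ξ)`. Differentiating the constraint itself gives
`v ξ • ∇θ ξ + γ' (θ ξ) = 0`, so the two factors are parallel and may be interchanged.
-/

open Filter Module.End
open scoped Topology Matrix

theorem hasDerivAt_deriv_iteratedDeriv_two {𝕜 F : Type*} [NontriviallyNormedField 𝕜]
    [NormedAddCommGroup F] [NormedSpace 𝕜 F] {f : 𝕜 → F} {t : 𝕜}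
    (hf : DifferentiableAt 𝕜 (deriv f) t) : HasDerivAt (deriv f) (iteratedDeriv 2 f t) t := by
  rw [iteratedDeriv_succ, iteratedDeriv_one]
  exact hf.hasDerivAt

section Gradient

variable {E : Type*} [NormedAddCommGroup E] [InnerProductSpace ℝ E] [CompleteSpace E]

theorem iteratedFDeriv_two_apply_of_hasGradientAt {f : E → ℝ} {G : E → E} {G' : E →L[ℝ] E} {x : E}
    (hf : ∀ᶠ ζ in 𝓝 x, HasGradientAt f (G ζ) ζ) (hG : HasFDerivAt G G' x) (h k : E) :
    iteratedFDeriv ℝ 2 f x ![h, k] = ⟪G' h, k⟫ := by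
  have hfderiv : fderiv ℝ f =ᶠ[𝓝 x] innerSL ℝ ∘ G := hf.mono fun _ hζ => hζ.hasFDerivAt.fderiv
  have hfderiv₂ : HasFDerivAt (fderiv ℝ f) ((innerSL ℝ).comp G') x :=
    ((innerSL ℝ (E := E)).hasFDerivAt.comp x hG).congr_of_eventuallyEq hfderiv
  simp [iteratedFDeriv_two_apply, hfderiv₂.fderiv]

variable {T : Set ℝ} {c : ℝ → E} {c' : E} {θ : E → ℝ} {g x : E}

theorem hasGradientAt_inner_curve_comp (hc : HasDerivWithinAt c c' T (θ x))
    (hθ : HasGradientAt θ g x) (hT : ∀ᶠ ζ in 𝓝 x, θ ζ ∈ T) :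
    HasGradientAt (fun ζ => ⟪c (θ ζ), ζ⟫) (⟪c', x⟫ • g + c (θ x)) x := by
  have hcθ := hc.hasFDerivWithinAt.comp_hasFDerivAt x hθ.hasFDerivAt hT
  rw [hasGradientAt_iff_hasFDerivAt]
  refine (hcθ.inner ℝ (hasFDerivAt_id x)).congr_fderiv ?_
  ext h
  simp [real_inner_smul_left, mul_comm, add_comm]

theorem hasGradientAt_inner_curve_comp_of_inner_eq_zero (hc : HasDerivWithinAt c c' T (θ x))
    (hθ : DifferentiableAt ℝ θ x) (hT : ∀ᶠ ζ in 𝓝 x, θ ζ ∈ T) (hcrit : ⟪c', x⟫ = 0) :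
    HasGradientAt (fun ζ => ⟪c (θ ζ), ζ⟫) (c (θ x)) x := by
  simpa [hcrit] using hasGradientAt_inner_curve_comp hc hθ.hasGradientAt hT

theorem gradient_eq_of_inner_curve_comp_eventually_eq_zero
    (hc : HasDerivWithinAt c c' T (θ x)) (hθ : DifferentiableAt ℝ θ x)
    (hT : ∀ᶠ ζ in 𝓝 x, θ ζ ∈ T) (hroot : ∀ᶠ ζ in 𝓝 x, ⟪c (θ ζ), ζ⟫ = 0) (hv : ⟪c', x⟫ ≠ 0) :
    gradient θ x = (-⟪c', x⟫⁻¹) • c (θ x) := by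
  have hsum : ⟪c', x⟫ • gradient θ x + c (θ x) = 0 :=
    (hasGradientAt_inner_curve_comp hc hθ.hasGradientAt hT).unique
      ((hasGradientAt_const x (0 : ℝ)).congr_of_eventuallyEq hroot)
  rw [neg_smul, ← smul_neg, ← eq_neg_of_add_eq_zero_left hsum, inv_smul_smul₀ hv]

end Gradient

theorem inner_add_mul_norm_sq_eq_zero_of_eq_neg_inv_smul {E : Type*} [NormedAddCommGroup E]
    [InnerProductSpace ℝ E] {a g : E} {v : ℝ} (hv : v ≠ 0) (hg : g = (-v⁻¹) • a) :
    ⟪a, g⟫ + v * ‖g‖ ^ 2 = 0 := by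
  have ha : a = -(v • g) := by simp [hg, hv]
  rw [ha, inner_neg_left, real_inner_smul_left, real_inner_self_eq_norm_sq, neg_add_cancel]

theorem hasEigenvalue_toLin'_vecMulVec_iff {K n : Type*} [Field K] [Fintype n] [DecidableEq n]
    [Nonempty n] {u w : n → K} {μ : K} :
    HasEigenvalue (Matrix.toLin' (Matrix.vecMulVec u w)) μ ↔
      μ = u ⬝ᵥ w ∨ μ = 0 ∧ 1 < Fintype.card n := by
  obtain ⟨m, hm⟩ := Nat.exists_eq_add_one.mpr (Fintype.card_pos (α := n))
  have hroot : μ ^ (m + 1) - u ⬝ᵥ w * μ ^ m = (μ - u ⬝ᵥ w) * μ ^ m := by ring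
  rw [hasEigenvalue_iff_isRoot_charpoly, Matrix.charpoly_toLin',
    Matrix.charpoly_vecMulVec, hm]
  simp [hroot, sub_eq_zero, Nat.pos_iff_ne_zero]

section Hessian

variable {ι : Type*} [Fintype ι] [DecidableEq ι]

/-- The Hessian matrix of a function on `ℝ^ι`; for `ι = Fin 3` it is `hessian` by definition. -/
def hessianMatrix (f : EuclideanSpace ℝ ι → ℝ) (x : EuclideanSpace ℝ ι) : Matrix ι ι ℝ :=
  Matrix.of fun i j =>
    iteratedFDeriv ℝ 2 f x ![EuclideanSpace.single i 1, EuclideanSpace.single j 1]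

theorem hessianMatrix_eq_vecMulVec_of_hasGradientAt_curve_comp {T : Set ℝ}
    {f θ : EuclideanSpace ℝ ι → ℝ} {c : ℝ → EuclideanSpace ℝ ι} {c' g x : EuclideanSpace ℝ ι}
    (hf : ∀ᶠ ζ in 𝓝 x, HasGradientAt f (c (θ ζ)) ζ) (hc : HasDerivWithinAt c c' T (θ x))
    (hθ : HasGradientAt θ g x) (hT : ∀ᶠ ζ in 𝓝 x, θ ζ ∈ T) :
    hessianMatrix f x = Matrix.vecMulVec g.ofLp c'.ofLp := by
  have hcθ := hc.hasFDerivWithinAt.comp_hasFDerivAt x hθ.hasFDerivAt hT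
  ext i j
  rw [hessianMatrix, Matrix.of_apply, iteratedFDeriv_two_apply_of_hasGradientAt hf hcθ]
  simp [EuclideanSpace.inner_single_right, Matrix.vecMulVec_apply]

/-- With derivatives taken within `T`, the choice `T = [-1, 1]` covers a curve defined only on the
closed interval, with one-sided derivatives at its endpoints. -/
theorem hessian_q1_rank_one_general [Nonempty ι] {T : Set ℝ} {γ γ' γ'' : ℝ → EuclideanSpace ℝ ι}
    {V : Set (EuclideanSpace ℝ ι)} {θ : EuclideanSpace ℝ ι → ℝ}
    (hγ : ∀ t ∈ T, HasDerivWithinAt γ (γ' t) T t)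
    (hγ' : ∀ t ∈ T, HasDerivWithinAt γ' (γ'' t) T t)
    (hV : IsOpen V) (hθ : DifferentiableOn ℝ θ V) (hθT : MapsTo θ V T)
    (hroot : ∀ ξ ∈ V, ⟪γ' (θ ξ), ξ⟫ = 0) (hv : ∀ ξ ∈ V, ⟪γ'' (θ ξ), ξ⟫ ≠ 0) :
    ∀ ξ ∈ V,
      gradient θ ξ = (-⟪γ'' (θ ξ), ξ⟫⁻¹) • γ' (θ ξ) ∧
      hessianMatrix (fun ζ => ⟪γ (θ ζ), ζ⟫) ξ
        = Matrix.vecMulVec (γ' (θ ξ)).ofLp (gradient θ ξ).ofLp ∧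
      (hessianMatrix (fun ζ => ⟪γ (θ ζ), ζ⟫) ξ).rank ≤ 1 ∧
      (∀ μ : ℝ, HasEigenvalue (Matrix.toLin' (hessianMatrix (fun ζ => ⟪γ (θ ζ), ζ⟫) ξ)) μ →
        μ = 0 ∨ μ = ⟪γ' (θ ξ), gradient θ ξ⟫) ∧
      HasEigenvalue (Matrix.toLin' (hessianMatrix (fun ζ => ⟪γ (θ ζ), ζ⟫) ξ))
        ⟪γ' (θ ξ), gradient θ ξ⟫ ∧
      ⟪γ' (θ ξ), gradient θ ξ⟫ + ⟪γ'' (θ ξ), ξ⟫ * ‖gradient θ ξ‖ ^ 2 = 0 := by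
  intro ξ hξ
  have hVnhds : ∀ ζ ∈ V, ∀ᶠ z in 𝓝 ζ, z ∈ V := fun ζ hζ => hV.mem_nhds hζ
  have hθd : ∀ ζ ∈ V, DifferentiableAt ℝ θ ζ := fun ζ hζ => hθ.differentiableAt (hVnhds ζ hζ)
  have hT : ∀ ζ ∈ V, ∀ᶠ z in 𝓝 ζ, θ z ∈ T := fun ζ hζ => (hVnhds ζ hζ).mono hθT
  have hgrad : gradient θ ξ = (-⟪γ'' (θ ξ), ξ⟫⁻¹) • γ' (θ ξ) :=
    gradient_eq_of_inner_curve_comp_eventually_eq_zero (hγ' _ (hθT hξ)) (hθd ξ hξ) (hT ξ hξ)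
      ((hVnhds ξ hξ).mono hroot) (hv ξ hξ)
  have hq : ∀ᶠ ζ in 𝓝 ξ, HasGradientAt (fun ζ => ⟪γ (θ ζ), ζ⟫) (γ (θ ζ)) ζ :=
    (hVnhds ξ hξ).mono fun ζ hζ => hasGradientAt_inner_curve_comp_of_inner_eq_zero
      (hγ _ (hθT hζ)) (hθd ζ hζ) (hT ζ hζ) (hroot ζ hζ)
  have hhess : hessianMatrix (fun ζ => ⟪γ (θ ζ), ζ⟫) ξ
      = Matrix.vecMulVec (γ' (θ ξ)).ofLp (gradient θ ξ).ofLp := by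
    rw [hessianMatrix_eq_vecMulVec_of_hasGradientAt_curve_comp hq (hγ _ (hθT hξ))
      (hθd ξ hξ).hasGradientAt (hT ξ hξ), hgrad, WithLp.ofLp_smul,
      Matrix.smul_vecMulVec, Matrix.vecMulVec_smul]
  have hκ : ⟪γ' (θ ξ), gradient θ ξ⟫ = (γ' (θ ξ)).ofLp ⬝ᵥ (gradient θ ξ).ofLp := by
    rw [EuclideanSpace.inner_eq_star_dotProduct, star_trivial, dotProduct_comm]
  refine ⟨hgrad, hhess, ?_, fun μ hμ => ?_, ?_,
    inner_add_mul_norm_sq_eq_zero_of_eq_neg_inv_smul (hv ξ hξ) hgrad⟩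
  · exact hhess ▸ Matrix.rank_vecMulVec_le _ _
  · rw [hhess, hasEigenvalue_toLin'_vecMulVec_iff, ← hκ] at hμ
    exact hμ.symm.imp_left And.left
  · rw [hhess, hasEigenvalue_toLin'_vecMulVec_iff]
    exact Or.inl hκ

end Hessian

/-- the Hessian of `q₁` is a rank-one outer product with unique
possibly non-zero eigenvalue `κ`. -/
theorem hessian_q1_rank_one
    (γ : ℝ → E3) (hγ : ContDiff ℝ (⊤ : ℕ∞) γ)
    (V : Set E3) (hVopen : IsOpen V) (hV0 : (0:E3) ∉ V)
    (θ₁ : E3 → ℝ) (hθ₁sm : ContDiffOn ℝ (⊤ : ℕ∞) θ₁ V)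
    (hθ₁map : ∀ ξ ∈ V, θ₁ ξ ∈ I1)
    (hθ₁root : ∀ ξ ∈ V, ⟪deriv γ (θ₁ ξ), ξ⟫ = 0)
    (hv : ∀ ξ ∈ V, (⟪iteratedDeriv 2 γ (θ₁ ξ), ξ⟫ : ℝ) ≠ 0) :
    ∀ ξ ∈ V,
      -- (i) ∇θ₁(ξ) = -γ'(θ₁(ξ)) / v(ξ)
      gradient θ₁ ξ = (-(⟪iteratedDeriv 2 γ (θ₁ ξ), ξ⟫ : ℝ)⁻¹) • deriv γ (θ₁ ξ) ∧
      -- (ii) the Hessian of q₁ is the outer product γ'(θ₁(ξ)) (∇θ₁(ξ))ᵀ ...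
      hessian (fun ζ => (⟪γ (θ₁ ζ), ζ⟫ : ℝ)) ξ
        = Matrix.vecMulVec (fun i => deriv γ (θ₁ ξ) i) (fun i => gradient θ₁ ξ i) ∧
      -- ... hence it has rank at most 1 ...
      (hessian (fun ζ => (⟪γ (θ₁ ζ), ζ⟫ : ℝ)) ξ).rank ≤ 1 ∧
      -- ... and its unique possibly non-zero eigenvalue is κ(ξ) = ⟨γ'(θ₁(ξ)), ∇θ₁(ξ)⟩:
      (∀ μ : ℝ, Module.End.HasEigenvalue
          (Matrix.toLin' (hessian (fun ζ => (⟪γ (θ₁ ζ), ζ⟫ : ℝ)) ξ)) μ →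
        μ = 0 ∨ μ = (⟪deriv γ (θ₁ ξ), gradient θ₁ ξ⟫ : ℝ)) ∧
      Module.End.HasEigenvalue
        (Matrix.toLin' (hessian (fun ζ => (⟪γ (θ₁ ζ), ζ⟫ : ℝ)) ξ))
        (⟪deriv γ (θ₁ ξ), gradient θ₁ ξ⟫ : ℝ) ∧
      -- (iii) κ(ξ) + v(ξ) |∇θ₁(ξ)|² = 0
      (⟪deriv γ (θ₁ ξ), gradient θ₁ ξ⟫ : ℝ)
        + (⟪iteratedDeriv 2 γ (θ₁ ξ), ξ⟫ : ℝ) * ‖gradient θ₁ ξ‖ ^ 2 = 0 := by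
  have hγ₂ : ContDiff ℝ 2 γ := contDiff_infty.mp hγ 2
  exact hessian_q1_rank_one_general (T := I1)
    (fun t _ => (hγ₂.differentiable two_ne_zero t).hasDerivAt.hasDerivWithinAt)
    (fun t _ =>
      (hasDerivAt_deriv_iteratedDeriv_two (hγ₂.differentiable_deriv_two t)).hasDerivWithinAt)
    hVopen (hθ₁sm.differentiableOn (by simp)) hθ₁map hθ₁root hv
end
end

section
/- Let γ : I → ℝ³ be a smooth non-degenerate curve and let σ ∈ I, 0 < λ < 1 with [σ−λ, σ+λ] ⊆ I. Then for all s ∈ I and all j ≥ 1 and ξ ∈ ℝ³: (i) ⟨γ_{σ,λ}^{(j)}(s), ξ⟩ = λ^j ⟨γ^{(j)}(σ + λs), ([γ]_{σ,λ})^{−⊤} ξ⟩; and (ii) det(γ_{σ,λ}'(s), γ_{σ,λ}''(s), γ_{σ,λ}'''(s)) = det(γ'(σ+λs), γ''(σ+λs), γ'''(σ+λs)) / det(γ'(σ), γ''(σ), γ'''(σ)). In particular, γ_{σ,λ} is also non-degenerate. -/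
open MeasureTheory Real Set
open scoped Matrix ContDiff

noncomputable section

/-- We work with `ℝ³` realised as `Fin 3 → ℝ`, with the dot product pairing. -/
abbrev V3 : Type := Fin 3 → ℝ

/-- Determinant of three vectors in `ℝ³` (as columns). -/
def det3 (v w z : V3) : ℝ :=
  Matrix.det !![v 0, w 0, z 0; v 1, w 1, z 1; v 2, w 2, z 2]

/-- The matrix `[γ]_σ` with columns `γ'(σ), γ''(σ), γ'''(σ)`. -/
def Gmat (γ : ℝ → V3) (σ : ℝ) : Matrix (Fin 3) (Fin 3) ℝ :=
  Matrix.of fun i j => iteratedDeriv ((j : ℕ) + 1) γ σ i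

/-- The diagonal matrix `D_λ = diag(λ, λ², λ³)`. -/
def Dmat (l : ℝ) : Matrix (Fin 3) (Fin 3) ℝ := Matrix.diagonal ![l, l ^ 2, l ^ 3]

/-- `[γ]_{σ,λ} = [γ]_σ D_λ`. -/
def Gmat' (γ : ℝ → V3) (σ l : ℝ) : Matrix (Fin 3) (Fin 3) ℝ := Gmat γ σ * Dmat l

/-- The `(σ,λ)`-rescaled curve `γ_{σ,λ}(s) = [γ]_{σ,λ}^{-1}(γ(σ+λs) - γ(σ))`. -/
def curveResc (γ : ℝ → V3) (σ l : ℝ) : ℝ → V3 :=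
  fun s => (Gmat' γ σ l)⁻¹ *ᵥ (γ (σ + l * s) - γ σ)

/-!
For `j ≥ 1` the constant `γ(σ)` drops out and the chain rule gives
`γ_{σ,λ}^{(j)}(s) = λ^j [γ]_{σ,λ}⁻¹ γ^{(j)}(σ + λs)`. Collecting the columns `j = 1, …, n` turns
this into the matrix identity `[γ_{σ,λ}]_s = [γ]_{σ,λ}⁻¹ [γ]_{σ+λs} D_λ`. Since
`[γ]_{σ,λ} = [γ]_σ D_λ`, the two factors `det D_λ` cancel on taking determinants. In the resulting
quotient the numerator is bounded away from zero and the denominator does not depend on `s`.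
-/

section IteratedDeriv

variable {𝕜 E F : Type*} [NontriviallyNormedField 𝕜]
  [NormedAddCommGroup E] [NormedSpace 𝕜 E] [NormedAddCommGroup F] [NormedSpace 𝕜 F]

theorem iteratedDeriv_fun_sub_const {j : ℕ} (hj : 0 < j) (f : 𝕜 → E) (c : E) :
    iteratedDeriv j (fun x => f x - c) = iteratedDeriv j f := by
  funext x
  simpa only [neg_add_eq_sub] using iteratedDeriv_const_add (f := f) (x := x) hj (-c)

theorem iteratedDeriv_continuousLinearMap_comp {j : ℕ} {f : 𝕜 → E} {x : 𝕜}
    (L : E →L[𝕜] F) (hf : ContDiffAt 𝕜 j f x) :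
    iteratedDeriv j (fun y => L (f y)) x = L (iteratedDeriv j f x) :=
  DFunLike.congr_fun (L.iteratedFDeriv_comp_left hf le_rfl) fun _ => 1

theorem iteratedDeriv_comp_const_add_const_mul {j : ℕ} {f : 𝕜 → E} (hf : ContDiff 𝕜 j f)
    (a b x : 𝕜) :
    iteratedDeriv j (fun y => f (a + b * y)) x = b ^ j • iteratedDeriv j f (a + b * x) := by
  have hshift : ContDiff 𝕜 j fun y => f (a + y) := by fun_prop
  rw [iteratedDeriv_comp_const_smul hshift b, iteratedDeriv_comp_const_add]

theorem iteratedDeriv_mulVec_affine_reparam {ι κ : Type*} [Fintype ι] [Fintype κ] {j : ℕ}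
    (hj : 0 < j) {γ : ℝ → ι → ℝ} (hγ : ContDiff ℝ j γ) (A : Matrix κ ι ℝ) (c : ι → ℝ)
    (a b s : ℝ) :
    iteratedDeriv j (fun t => A *ᵥ (γ (a + b * t) - c)) s
      = b ^ j • (A *ᵥ iteratedDeriv j γ (a + b * s)) := by
  have hdiff : ContDiffAt ℝ j (fun t => γ (a + b * t) - c) s := by fun_prop
  calc iteratedDeriv j (fun t => A *ᵥ (γ (a + b * t) - c)) s
      = A *ᵥ iteratedDeriv j (fun t => γ (a + b * t) - c) s :=
        iteratedDeriv_continuousLinearMap_comp A.mulVecLin.toContinuousLinearMap hdiff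
    _ = A *ᵥ (b ^ j • iteratedDeriv j γ (a + b * s)) := by
        rw [iteratedDeriv_fun_sub_const hj, iteratedDeriv_comp_const_add_const_mul hγ]
    _ = b ^ j • (A *ᵥ iteratedDeriv j γ (a + b * s)) := Matrix.mulVec_smul ..

end IteratedDeriv

section RescaledCurve

variable {n : ℕ}

/-- The matrix `[γ]_s` of a curve in `ℝⁿ`, with columns `γ'(s), …, γ⁽ⁿ⁾(s)`: the column with index
`j : Fin n` is the derivative of order `j + 1`. It extends `Gmat` to all dimensions. -/
def derivMatrix (γ : ℝ → Fin n → ℝ) (s : ℝ) : Matrix (Fin n) (Fin n) ℝ :=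
  Matrix.of fun i j => iteratedDeriv ((j : ℕ) + 1) γ s i

/-- The anisotropic dilation `D_λ = diag(λ, …, λⁿ)`, which extends `Dmat` to all dimensions. -/
def dilationMatrix (n : ℕ) (l : ℝ) : Matrix (Fin n) (Fin n) ℝ :=
  Matrix.diagonal fun j => l ^ ((j : ℕ) + 1)

/-- The `(σ, λ)`-rescaling of a curve in `ℝⁿ`, which extends `curveResc` to all dimensions. As
there, the matrix inverse is `0` when `[γ]_σ D_λ` is singular. -/
def rescaledCurve (γ : ℝ → Fin n → ℝ) (σ l : ℝ) : ℝ → Fin n → ℝ :=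
  fun s => (derivMatrix γ σ * dilationMatrix n l)⁻¹ *ᵥ (γ (σ + l * s) - γ σ)

/-- Non-degeneracy of a curve on a set of parameters: the determinant of its first `n` derivatives
is bounded away from zero there. -/
def NondegenerateOn (γ : ℝ → Fin n → ℝ) (S : Set ℝ) : Prop :=
  ∃ c : ℝ, 0 < c ∧ ∀ s ∈ S, c ≤ |(derivMatrix γ s).det|

theorem det_dilationMatrix_ne_zero {l : ℝ} (hl : l ≠ 0) : (dilationMatrix n l).det ≠ 0 := by
  rw [dilationMatrix, Matrix.det_diagonal]
  exact Finset.prod_ne_zero_iff.mpr fun _ _ => pow_ne_zero _ hl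

theorem derivMatrix_mulVec_affine_reparam {γ : ℝ → Fin n → ℝ} (hγ : ContDiff ℝ n γ)
    (A : Matrix (Fin n) (Fin n) ℝ) (c : Fin n → ℝ) (a b s : ℝ) :
    derivMatrix (fun t => A *ᵥ (γ (a + b * t) - c)) s
      = A * derivMatrix γ (a + b * s) * dilationMatrix n b := by
  ext i j
  have hγj : ContDiff ℝ ((j : ℕ) + 1 : ℕ) γ := hγ.of_le (by exact_mod_cast j.isLt)
  rw [dilationMatrix, Matrix.mul_diagonal, mul_comm]
  exact congrFun (iteratedDeriv_mulVec_affine_reparam (Nat.succ_pos _) hγj A c a b s) i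

theorem iteratedDeriv_rescaledCurve_dotProduct {j : ℕ} (hj : 0 < j) {γ : ℝ → Fin n → ℝ}
    (hγ : ContDiff ℝ j γ) (σ l s : ℝ) (ξ : Fin n → ℝ) :
    iteratedDeriv j (rescaledCurve γ σ l) s ⬝ᵥ ξ
      = l ^ j * (iteratedDeriv j γ (σ + l * s) ⬝ᵥ
          (((derivMatrix γ σ * dilationMatrix n l)⁻¹)ᵀ *ᵥ ξ)) := by
  unfold rescaledCurve
  rw [iteratedDeriv_mulVec_affine_reparam hj hγ, smul_dotProduct, smul_eq_mul,
    Matrix.dotProduct_transpose_mulVec, dotProduct_comm]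

theorem det_derivMatrix_rescaledCurve {γ : ℝ → Fin n → ℝ} (hγ : ContDiff ℝ n γ) (σ : ℝ) {l : ℝ}
    (hl : l ≠ 0) (s : ℝ) :
    (derivMatrix (rescaledCurve γ σ l) s).det
      = (derivMatrix γ (σ + l * s)).det / (derivMatrix γ σ).det := by
  unfold rescaledCurve
  rw [derivMatrix_mulVec_affine_reparam hγ, Matrix.det_mul, Matrix.det_mul,
    Matrix.det_nonsing_inv, Ring.inverse_eq_inv', Matrix.det_mul, mul_assoc, ← div_eq_inv_mul,
    mul_div_mul_right _ _ (det_dilationMatrix_ne_zero hl)]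

theorem NondegenerateOn.rescaledCurve {γ : ℝ → Fin n → ℝ} (hγ : ContDiff ℝ n γ) {S T : Set ℝ}
    (hT : NondegenerateOn γ T) {σ l : ℝ} (hσ : σ ∈ T) (hl : l ≠ 0)
    (hmaps : MapsTo (fun s => σ + l * s) S T) :
    NondegenerateOn (rescaledCurve γ σ l) S := by
  obtain ⟨c, hc, hbound⟩ := hT
  refine ⟨c / |(derivMatrix γ σ).det|, div_pos hc (hc.trans_le (hbound σ hσ)), fun s hs => ?_⟩
  rw [det_derivMatrix_rescaledCurve hγ σ hl, abs_div]
  gcongr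
  exact hbound _ (hmaps hs)

theorem mapsTo_const_add_const_mul_Icc (σ : ℝ) {l : ℝ} (hl : 0 ≤ l) :
    MapsTo (fun s => σ + l * s) (Icc (-1) 1) (Icc (σ - l) (σ + l)) := by
  rintro s ⟨hs₁, hs₂⟩
  constructor <;> nlinarith

theorem rescaled_curve_properties_general {m : WithTop ℕ∞} {γ : ℝ → Fin n → ℝ}
    (hγ : ContDiff ℝ m γ) (hnm : n ≤ m) {σ l : ℝ} (hl : 0 < l)
    (hnondeg : NondegenerateOn γ (Icc (σ - l) (σ + l))) :
    (∀ s : ℝ, ∀ j : ℕ, 1 ≤ j → j ≤ m → ∀ ξ : Fin n → ℝ,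
      iteratedDeriv j (rescaledCurve γ σ l) s ⬝ᵥ ξ
        = l ^ j * (iteratedDeriv j γ (σ + l * s) ⬝ᵥ
            (((derivMatrix γ σ * dilationMatrix n l)⁻¹)ᵀ *ᵥ ξ))) ∧
    (∀ s : ℝ, (derivMatrix (rescaledCurve γ σ l) s).det
        = (derivMatrix γ (σ + l * s)).det / (derivMatrix γ σ).det) ∧
    NondegenerateOn (rescaledCurve γ σ l) (Icc (-1) 1) := by
  have hγn : ContDiff ℝ n γ := hγ.of_le hnm
  have hσ : σ ∈ Icc (σ - l) (σ + l) := ⟨by linarith, by linarith⟩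
  exact ⟨fun s j hj hjm => iteratedDeriv_rescaledCurve_dotProduct hj (hγ.of_le hjm) σ l s,
    det_derivMatrix_rescaledCurve hγn σ hl.ne',
    hnondeg.rescaledCurve hγn hσ hl.ne' (mapsTo_const_add_const_mul_Icc σ hl.le)⟩

end RescaledCurve

section DimensionThree

theorem det3_iteratedDeriv (γ : ℝ → V3) (s : ℝ) :
    det3 (iteratedDeriv 1 γ s) (iteratedDeriv 2 γ s) (iteratedDeriv 3 γ s)
      = (derivMatrix γ s).det := by
  rw [det3]
  congr 1
  ext i j
  fin_cases i <;> fin_cases j <;> rfl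

theorem Gmat'_eq_derivMatrix_mul_dilationMatrix (γ : ℝ → V3) (σ l : ℝ) :
    Gmat' γ σ l = derivMatrix γ σ * dilationMatrix 3 l := by
  have hD : Dmat l = dilationMatrix 3 l := by
    rw [Dmat, dilationMatrix]
    congr 1
    ext j
    fin_cases j <;> simp
  rw [Gmat', hD]
  rfl

theorem curveResc_eq_rescaledCurve (γ : ℝ → V3) (σ l : ℝ) :
    curveResc γ σ l = rescaledCurve γ σ l := by
  unfold curveResc rescaledCurve
  rw [Gmat'_eq_derivMatrix_mul_dilationMatrix]

end DimensionThree

/-- properties of the rescaled curve `γ_{σ,λ}`. -/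
theorem rescaled_curve_properties
    (γ : ℝ → V3) (hγ : ContDiff ℝ (⊤ : ℕ∞) γ)
    (c₀ : ℝ) (hc₀ : 0 < c₀)
    (hnondeg : ∀ s ∈ I1,
      c₀ ≤ |det3 (iteratedDeriv 1 γ s) (iteratedDeriv 2 γ s) (iteratedDeriv 3 γ s)|)
    (σ l : ℝ) (hσ : σ ∈ I1) (hl0 : 0 < l) (hl1 : l < 1)
    (hIcc : Set.Icc (σ - l) (σ + l) ⊆ I1) :
    (∀ s ∈ I1, ∀ j : ℕ, 1 ≤ j → ∀ ξ : V3,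
      iteratedDeriv j (curveResc γ σ l) s ⬝ᵥ ξ
        = l ^ j * (iteratedDeriv j γ (σ + l * s) ⬝ᵥ (((Gmat' γ σ l)⁻¹)ᵀ *ᵥ ξ))) ∧
    (∀ s ∈ I1,
      det3 (iteratedDeriv 1 (curveResc γ σ l) s) (iteratedDeriv 2 (curveResc γ σ l) s)
          (iteratedDeriv 3 (curveResc γ σ l) s)
        = det3 (iteratedDeriv 1 γ (σ + l * s)) (iteratedDeriv 2 γ (σ + l * s))
            (iteratedDeriv 3 γ (σ + l * s))
          / det3 (iteratedDeriv 1 γ σ) (iteratedDeriv 2 γ σ) (iteratedDeriv 3 γ σ)) ∧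
    -- in particular, γ_{σ,λ} is non-degenerate:
    (∃ c₀' : ℝ, 0 < c₀' ∧ ∀ s ∈ I1,
      c₀' ≤ |det3 (iteratedDeriv 1 (curveResc γ σ l) s) (iteratedDeriv 2 (curveResc γ σ l) s)
        (iteratedDeriv 3 (curveResc γ σ l) s)|) := by
  simp only [det3_iteratedDeriv, Gmat'_eq_derivMatrix_mul_dilationMatrix,
    curveResc_eq_rescaledCurve] at hnondeg ⊢
  have natCast_le_infty (k : ℕ) : (k : WithTop ℕ∞) ≤ ∞ := mod_cast le_top
  obtain ⟨hpairing, hdet, hresc⟩ := rescaled_curve_properties_general hγ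
    (natCast_le_infty 3) hl0 ⟨c₀, hc₀, fun s hs => hnondeg s (hIcc hs)⟩
  exact ⟨fun s _ j hj => hpairing s j hj (natCast_le_infty j), fun s _ => hdet s, hresc⟩
end
end

section
/- Let γ : I → ℝ³ be a smooth non-degenerate curve, σ ∈ I, 0 < λ < 1 with [σ−λ, σ+λ] ⊆ I, and let a ∈ C^∞((ℝ³∖{0}) × ℝ × ℝ) with a(ξ; t; ·) compactly supported in the interior of I for each (ξ,t). Define a_{σ,λ}(ξ; t; s) := a(([γ]_{σ,λ})^{−⊤} ξ; t; σ + λs) and f_{σ,λ} := f ∘ [γ]_{σ,λ}. Then for every Schwartz function f on ℝ³, every t ∈ ℝ and every x ∈ ℝ³: m_γ[a](D; t) f(x) = λ · ( m_{γ_{σ,λ}}[a_{σ,λ}](D; t) f_{σ,λ} ) ( [γ]_{σ,λ}^{−1} (x − t γ(σ)) ). -/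
open MeasureTheory Real Set
open scoped Matrix ContDiff

noncomputable section

/-- The Fourier transform on `ℝ³` (dot product pairing, paper's convention). -/
def ftr (f : V3 → ℂ) (ξ : V3) : ℂ :=
  ∫ x : V3, Complex.exp (-Complex.I * ((x ⬝ᵥ ξ : ℝ) : ℂ)) * f x

/-- The Fourier multiplier operator `m(D)`. -/
def multOp (m : V3 → ℂ) (f : V3 → ℂ) (x : V3) : ℂ :=
  (((2 * Real.pi)⁻¹ ^ 3 : ℝ) : ℂ) *
    ∫ ξ : V3, Complex.exp (Complex.I * ((x ⬝ᵥ ξ : ℝ) : ℂ)) * m ξ * ftr f ξ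

/-- The multiplier `m_γ[a](ξ;t) = ∫ e^{-it⟨γ(s),ξ⟩} a(ξ;t;s) ρ(t) ds`. -/
def mSym (γ : ℝ → V3) (ρ : ℝ → ℝ) (a : V3 → ℝ → ℝ → ℂ) (ξ : V3) (t : ℝ) : ℂ :=
  ∫ s : ℝ, Complex.exp (-Complex.I * (t : ℂ) * ((γ s ⬝ᵥ ξ : ℝ) : ℂ)) * a ξ t s * ((ρ t : ℝ) : ℂ)

/-- The rescaled symbol `a_{σ,λ}(ξ;t;s) = a([γ]_{σ,λ}^{-⊤} ξ; t; σ + λs)`. -/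
def symResc (γ : ℝ → V3) (σ l : ℝ) (a : V3 → ℝ → ℝ → ℂ) : V3 → ℝ → ℝ → ℂ :=
  fun ξ t s => a (((Gmat' γ σ l)⁻¹)ᵀ *ᵥ ξ) t (σ + l * s)

/-!
A Fourier multiplier operator turns a modulation of the multiplier into a translation, and it
commutes with an invertible matrix acting by `A` in space and by `A⁻ᵀ` in frequency: the Jacobians
of the two changes of variables cancel. On the side of the multiplier, translating the curve by `-v`
modulates `m_γ[a]`, a matrix acting on the curve moves to the frequency by duality, and the affine
change of parameter contributes the factor `λ`. The rescaled curve is the composition of these three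
operations.
-/

section ChangeOfVariables

theorem integral_comp_mulVec {ι E : Type*} [Fintype ι] [DecidableEq ι] [NormedAddCommGroup E]
    [NormedSpace ℝ E] {A : Matrix ι ι ℝ} (hA : A.det ≠ 0) (g : (ι → ℝ) → E) :
    ∫ y, g (A *ᵥ y) = |A.det|⁻¹ • ∫ x, g x := by
  let e : (ι → ℝ) ≃L[ℝ] (ι → ℝ) :=
    (A.toLinearEquiv' (A.invertibleOfIsUnitDet hA.isUnit)).toContinuousLinearEquiv
  calc ∫ y, g (A *ᵥ y) = ∫ x, g x ∂(Measure.map (Matrix.toLin' A) volume) :=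
        (e.toHomeomorph.measurableEmbedding.integral_map g).symm
    _ = |A.det|⁻¹ • ∫ x, g x := by
        rw [Real.map_matrix_volume_pi_eq_smul_volume_pi hA, integral_smul_measure,
          ENNReal.toReal_ofReal (abs_nonneg _), abs_inv]

theorem integral_comp_add_mul_left {E : Type*} [NormedAddCommGroup E] [NormedSpace ℝ E]
    (g : ℝ → E) (σ l : ℝ) : ∫ s, g (σ + l * s) = |l⁻¹| • ∫ s, g s := by
  rw [Measure.integral_comp_mul_left (fun s => g (σ + s)), integral_add_left_eq_self]

end ChangeOfVariables

section MultiplierOperator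

variable (m f : V3 → ℂ)

theorem multOp_const_mul (c : ℂ) (x : V3) :
    multOp (fun ξ => c * m ξ) f x = c * multOp m f x := by
  simp only [multOp, mul_left_comm _ c, mul_assoc, integral_const_mul]

theorem multOp_modulation (v x : V3) :
    multOp (fun ξ => Complex.exp (Complex.I * ((v ⬝ᵥ ξ : ℝ) : ℂ)) * m ξ) f x =
      multOp m f (x + v) := by
  simp only [multOp, add_dotProduct, Complex.ofReal_add, mul_add, Complex.exp_add, mul_assoc]

theorem ftr_comp_mulVec {A : Matrix (Fin 3) (Fin 3) ℝ} (hA : A.det ≠ 0) (η : V3) :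
    ftr (fun y => f (A *ᵥ y)) η = |A.det|⁻¹ • ftr f ((A⁻¹)ᵀ *ᵥ η) := by
  have dual_pairing (y : V3) : (A *ᵥ y) ⬝ᵥ ((A⁻¹)ᵀ *ᵥ η) = y ⬝ᵥ η := by
    rw [Matrix.dotProduct_mulVec, Matrix.vecMul_transpose, Matrix.mulVec_mulVec,
      Matrix.nonsing_inv_mul _ hA.isUnit, Matrix.one_mulVec]
  simp only [ftr, ← integral_comp_mulVec hA, dual_pairing]

theorem multOp_comp_mulVec {A : Matrix (Fin 3) (Fin 3) ℝ} (hA : A.det ≠ 0) (x : V3) :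
    multOp (fun ξ => m ((A⁻¹)ᵀ *ᵥ ξ)) (fun y => f (A *ᵥ y)) (A⁻¹ *ᵥ x) = multOp m f x := by
  have det_inv_transpose : ((A⁻¹)ᵀ).det = A.det⁻¹ := by
    rw [Matrix.det_transpose, Matrix.det_nonsing_inv, Ring.inverse_eq_inv']
  have frequency_change := integral_comp_mulVec (det_inv_transpose ▸ inv_ne_zero hA)
    fun ξ => Complex.exp (Complex.I * ((x ⬝ᵥ ξ : ℝ) : ℂ)) * m ξ * ftr f ξ
  have dual_pairing (ξ : V3) : (A⁻¹ *ᵥ x) ⬝ᵥ ξ = x ⬝ᵥ ((A⁻¹)ᵀ *ᵥ ξ) := by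
    rw [Matrix.dotProduct_mulVec, Matrix.vecMul_transpose]
  simp only [multOp, ftr_comp_mulVec f hA, dual_pairing, mul_smul_comm, integral_smul]
  rw [frequency_change, det_inv_transpose, abs_inv, inv_inv, mul_smul_comm,
    inv_smul_smul₀ (abs_ne_zero.mpr hA)]

end MultiplierOperator

section CurveMultiplier

variable (γ : ℝ → V3) (ρ : ℝ → ℝ) (a : V3 → ℝ → ℝ → ℂ) (ξ : V3) (t : ℝ)

theorem mSym_sub_const (v : V3) :
    mSym (fun s => γ s - v) ρ a ξ t =
      Complex.exp (Complex.I * (((t • v) ⬝ᵥ ξ : ℝ) : ℂ)) * mSym γ ρ a ξ t := by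
  have phase_split (s : ℝ) :
      Complex.exp (-Complex.I * t * (((γ s - v) ⬝ᵥ ξ : ℝ) : ℂ)) =
        Complex.exp (Complex.I * (((t • v) ⬝ᵥ ξ : ℝ) : ℂ)) *
          Complex.exp (-Complex.I * t * ((γ s ⬝ᵥ ξ : ℝ) : ℂ)) := by
    rw [← Complex.exp_add, sub_dotProduct, smul_dotProduct]
    congr 1
    push_cast [smul_eq_mul]
    ring
  simp only [mSym, phase_split]
  simp only [mul_assoc, integral_const_mul]

theorem mSym_mulVec (B : Matrix (Fin 3) (Fin 3) ℝ) :
    mSym (fun s => B *ᵥ γ s) ρ (fun η => a (Bᵀ *ᵥ η)) ξ t = mSym γ ρ a (Bᵀ *ᵥ ξ) t := by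
  simp only [mSym, Matrix.dotProduct_mulVec, Matrix.vecMul_transpose]

theorem abs_mul_mSym_comp_affine (σ : ℝ) {l : ℝ} (hl : l ≠ 0) :
    ((|l| : ℝ) : ℂ) *
        mSym (fun s => γ (σ + l * s)) ρ (fun η τ s => a η τ (σ + l * s)) ξ t =
      mSym γ ρ a ξ t := by
  have parameter_change := integral_comp_add_mul_left
    (fun s => Complex.exp (-Complex.I * t * ((γ s ⬝ᵥ ξ : ℝ) : ℂ)) * a ξ t s * (ρ t : ℂ)) σ l
  rw [mSym, parameter_change, ← Complex.real_smul, abs_inv, smul_inv_smul₀ (abs_ne_zero.mpr hl),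
    mSym]

theorem abs_mul_mSym_affine_rescaling (A : Matrix (Fin 3) (Fin 3) ℝ) (v : V3) (σ : ℝ) {l : ℝ}
    (hl : l ≠ 0) :
    ((|l| : ℝ) : ℂ) * mSym (fun s => A⁻¹ *ᵥ (γ (σ + l * s) - v)) ρ
        (fun η τ s => a ((A⁻¹)ᵀ *ᵥ η) τ (σ + l * s)) ξ t =
      Complex.exp (Complex.I * (((t • v) ⬝ᵥ ((A⁻¹)ᵀ *ᵥ ξ) : ℝ) : ℂ)) *
        mSym γ ρ a ((A⁻¹)ᵀ *ᵥ ξ) t := by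
  rw [mSym_mulVec (fun s => γ (σ + l * s) - v) ρ (fun η τ s => a η τ (σ + l * s)),
    abs_mul_mSym_comp_affine (fun s => γ s - v) ρ a _ t σ hl, mSym_sub_const]

end CurveMultiplier

theorem integrable_slice_of_continuousOn {a : V3 → ℝ → ℝ → ℂ}
    (ha : ContinuousOn (fun p : V3 × ℝ × ℝ => a p.1 p.2.1 p.2.2) {p | p.1 ≠ 0})
    {ξ : V3} (hξ : ξ ≠ 0) {t b c : ℝ} (hsupp : Function.support (a ξ t) ⊆ Ioo b c) :
    Integrable (a ξ t) :=
  Continuous.integrable_of_hasCompactSupport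
    (ha.comp_continuous (f := fun s => (ξ, t, s)) (by fun_prop) fun _ => hξ)
    (HasCompactSupport.of_support_subset_isCompact isCompact_Icc (hsupp.trans Ioo_subset_Icc_self))

theorem det_Gmat'_ne_zero {γ : ℝ → V3} {σ l : ℝ} (hl : l ≠ 0)
    (h : det3 (iteratedDeriv 1 γ σ) (iteratedDeriv 2 γ σ) (iteratedDeriv 3 γ σ) ≠ 0) :
    (Gmat' γ σ l).det ≠ 0 := by
  have det_Gmat : (Gmat γ σ).det =
      det3 (iteratedDeriv 1 γ σ) (iteratedDeriv 2 γ σ) (iteratedDeriv 3 γ σ) := by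
    simp [Gmat, det3, Matrix.det_fin_three]
  have det_Dmat : (Dmat l).det = l * l ^ 2 * l ^ 3 := by
    simp [Dmat, Matrix.det_diagonal, Fin.prod_univ_three]
  rw [Gmat', Matrix.det_mul, det_Gmat, det_Dmat]
  exact mul_ne_zero h (by positivity)

theorem multiplier_rescaling_identity_general
    {γ : ℝ → V3} (_hγ : Continuous γ) {A : Matrix (Fin 3) (Fin 3) ℝ} (hA : A.det ≠ 0) (v : V3)
    (σ : ℝ) {l : ℝ} (hl : l ≠ 0) (ρ : ℝ → ℝ) {a : V3 → ℝ → ℝ → ℂ} {t : ℝ}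
    (_ha : ∀ ξ ≠ 0, Integrable (a ξ t)) {f : V3 → ℂ} (_hf : Integrable f) (x : V3) :
    multOp (fun ξ => mSym γ ρ a ξ t) f x =
      ((|l| : ℝ) : ℂ) *
        multOp
          (fun ξ => mSym (fun s => A⁻¹ *ᵥ (γ (σ + l * s) - v)) ρ
            (fun η τ s => a ((A⁻¹)ᵀ *ᵥ η) τ (σ + l * s)) ξ t)
          (fun y => f (A *ᵥ y)) (A⁻¹ *ᵥ (x - t • v)) := by
  simp only [← multOp_const_mul, abs_mul_mSym_affine_rescaling γ ρ a _ t A v σ hl]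
  rw [multOp_comp_mulVec
      (fun η => Complex.exp (Complex.I * (((t • v) ⬝ᵥ η : ℝ) : ℂ)) * mSym γ ρ a η t) f hA,
    multOp_modulation, sub_add_cancel]

/-- the rescaling identity for the multiplier operators. -/
theorem multiplier_rescaling_identity
    (γ : ℝ → V3) (hγ : ContDiff ℝ (⊤ : ℕ∞) γ)
    (c₀ : ℝ) (hc₀ : 0 < c₀)
    (hnondeg : ∀ s ∈ I1,
      c₀ ≤ |det3 (iteratedDeriv 1 γ s) (iteratedDeriv 2 γ s) (iteratedDeriv 3 γ s)|)
    (σ l : ℝ) (hσ : σ ∈ I1) (hl0 : 0 < l) (hl1 : l < 1)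
    (hIcc : Set.Icc (σ - l) (σ + l) ⊆ I1)
    (ρ : ℝ → ℝ) (hρsm : ContDiff ℝ (⊤ : ℕ∞) ρ) (hρc : HasCompactSupport ρ)
    (hρsupp : Function.support ρ ⊆ Set.Ioo (1/2 : ℝ) 4)
    (a : V3 → ℝ → ℝ → ℂ)
    (ha : ContDiffOn ℝ (⊤ : ℕ∞) (fun p : V3 × ℝ × ℝ => a p.1 p.2.1 p.2.2)
      {p : V3 × ℝ × ℝ | p.1 ≠ 0})
    (hasupp : ∀ ξ t, Function.support (fun s => a ξ t s) ⊆ Set.Ioo (-1 : ℝ) 1) :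
    ∀ (f : SchwartzMap V3 ℂ) (t : ℝ) (x : V3),
      multOp (fun ξ => mSym γ ρ a ξ t) (⇑f) x
        = (l : ℂ) *
            multOp (fun ξ => mSym (curveResc γ σ l) ρ (symResc γ σ l a) ξ t)
              (fun y => f (Gmat' γ σ l *ᵥ y))
              ((Gmat' γ σ l)⁻¹ *ᵥ (x - t • γ σ)) := by
  intro f t x
  have det3_ne_zero := abs_pos.mp (hc₀.trans_le (hnondeg σ hσ))
  have rescaling := multiplier_rescaling_identity_general hγ.continuous
    (det_Gmat'_ne_zero hl0.ne' det3_ne_zero) (γ σ) σ hl0.ne' ρ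
    (fun ξ hξ => integrable_slice_of_continuousOn ha.continuousOn hξ (hasupp ξ t)) f.integrable x
  rw [abs_of_pos hl0] at rescaling
  exact rescaling
end
end
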